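/- Suppose ≺ is a partition-suitable partial order on H. If H₁, H₂ ∈ Φ(W) with H₁ ≠ H₂, then H₁ ∩ H₂ = ∅. -/

import Mathlib

open Classical

noncomputable section

variable {α : Type}

/-- The strict order `lt` on the collection `HH` of subsets is partition
suitable: whenever `H₁, H₂ ∈ HH` intersect, there is `H* ∈ HH` with
`H* ⊆ H₁ ∪ H₂`, `H₁ ⪯ H*` and `H₂ ⪯ H*`. -/
def PartitionSuitable (HH : Set (Set α)) (lt : Set α → Set α → Prop) : Prop :=
  ∀ H₁ ∈ HH, ∀ H₂ ∈ HH, (H₁ ∩ H₂).Nonempty →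
    ∃ Hs ∈ HH, Hs ⊆ H₁ ∪ H₂ ∧ (lt H₁ Hs ∨ H₁ = Hs) ∧ (lt H₂ Hs ∨ H₂ = Hs)

/-- `Φ(W)`: the `≺`-maximal members of the collection `HH` contained in `W`. -/
def PhiA (HH : Set (Set α)) (lt : Set α → Set α → Prop) (W : Set α) :
    Set (Set α) :=
  {H | H ∈ HH ∧ H ⊆ W ∧ ∀ H' ∈ HH, H' ⊆ W → H' ≠ H → ¬ lt H H'}

/-- `ψ(W) = W \ ⋃ Φ(W)`. -/
def psiA (HH : Set (Set α)) (lt : Set α → Set α → Prop) (W : Set α) : Set α :=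
  W \ ⋃₀ PhiA HH lt W

/-- The partition `[W]`, defined recursively by `[∅] = ∅` and
`[W] = Φ(W) ∪ [ψ(W)]`.  (The cardinality guard is automatically satisfied
whenever `HH` contains all singletons, since then `ψ(W) ⊊ W` for `W ≠ ∅`.) -/
def partnA (HH : Set (Set α)) (lt : Set α → Set α → Prop) (W : Set α) :
    Set (Set α) :=
  if W = ∅ then ∅
  else if h : (psiA HH lt W).ncard < W.ncard then
    PhiA HH lt W ∪ partnA HH lt (psiA HH lt W)
  else PhiA HH lt W
termination_by W.ncard
decreasing_by exact h

/-- **Proposition (maximal heads are disjoint).**  If `≺` is a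
partition-suitable partial order on `HH` and `H₁, H₂ ∈ Φ(W)` with `H₁ ≠ H₂`,
then `H₁ ∩ H₂ = ∅`. -/
theorem Phi_pairwise_disjoint {α : Type} (V : Set α) (HH : Set (Set α))
    (hne : ∀ H ∈ HH, H.Nonempty) (hsub : ∀ H ∈ HH, H ⊆ V)
    (hsingle : ∀ v ∈ V, {v} ∈ HH)
    (lt : Set α → Set α → Prop)
    (hirr : ∀ H, ¬ lt H H) (htrans : ∀ a b c, lt a b → lt b c → lt a c)
    (hsuit : PartitionSuitable HH lt)
    (W : Set α) (hW : W ⊆ V)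
    (H₁ H₂ : Set α) (h1 : H₁ ∈ PhiA HH lt W) (h2 : H₂ ∈ PhiA HH lt W)
    (hne12 : H₁ ≠ H₂) : H₁ ∩ H₂ = ∅ := by
  by_contra hcon
  obtain ⟨m1, s1, x1⟩ := h1
  obtain ⟨m2, s2, x2⟩ := h2
  obtain ⟨Hs, hm, hs, ha, hb⟩ :=
    hsuit H₁ m1 H₂ m2 (Set.nonempty_iff_ne_empty.mpr hcon)
  have hsW : Hs ⊆ W := hs.trans (Set.union_subset s1 s2)
  have e1 : H₁ = Hs := by
    by_contra h
    exact x1 Hs hm hsW (Ne.symm h) (ha.resolve_right h)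
  have e2 : H₂ = Hs := by
    by_contra h
    exact x2 Hs hm hsW (Ne.symm h) (hb.resolve_right h)
  exact hne12 (e1.trans e2.symm)
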